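/- arXiv:1103.6102 — 2 statements merged into one kernel-verified Lean document; each statement's English description precedes it below -/
import Mathlib

section
/- Let E = {ξ ∈ ℝ^{2×2} : (λ_1(ξ), λ_2(ξ)) ∈ Λ_E, det ξ > 0} where Λ_E = {(a_1, a_2), (b_1, b_2)} with 0 < a_1 < b_1 < a_2 < b_2, and set θ̲ = (−a_1 a_2 + b_1 b_2)/(b_1 + b_2 − a_1 − a_2). Then int Rco_f E = {ξ ∈ ℝ^{2×2} : (λ_1(ξ), λ_2(ξ)) ∈ rel int R(Λ_E), det ξ > 0}, where rel int R(Λ_E), the relative interior of R(Λ_E) with respect to {(x_1, x_2) ∈ ℝ² : 0 < x_1 ≤ x_2}, is the set of points (x_1, x_2) ∈ ℝ² such that: a_1 < x_1 ≤ x_2 < b_2; x_2 > a_1 a_2 / x_1; x_2 < (−a_1 a_2 + θ̲(a_1 + a_2) − θ̲ x_1)/(−x_1 + θ̲) whenever a_1 < x_1 < b_1; and x_2 < b_1 b_2 / x_1. -/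
open MeasureTheory Filter

attribute [local instance] Classical.propDecidable
attribute [local instance] Matrix.frobeniusNormedAddCommGroup Matrix.frobeniusNormedSpace

noncomputable section

/-- The space of real `N × n` matrices. -/
abbrev Mat (N n : ℕ) : Type := Matrix (Fin N) (Fin n) ℝ

/-- A function `f : ℝ^{N×n} → ℝ` is rank one convex. -/
def RankOneConvexFun {N n : ℕ} (f : Mat N n → ℝ) : Prop :=
  ∀ lam ∈ Set.Icc (0:ℝ) 1, ∀ ξ η : Mat N n, (ξ - η).rank = 1 →
    f (lam • ξ + (1 - lam) • η) ≤ lam * f ξ + (1 - lam) * f η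

/-- The hull `Rco_f E`. -/
def RcoF {N n : ℕ} (E : Set (Mat N n)) : Set (Mat N n) :=
  {ξ | ∀ f : Mat N n → ℝ, RankOneConvexFun f → (∀ η ∈ E, f η ≤ 0) → f ξ ≤ 0}

/-- A set of matrices is rank one convex. -/
def RankOneConvexSet {N n : ℕ} (S : Set (Mat N n)) : Prop :=
  ∀ A ∈ S, ∀ B ∈ S, (A - B).rank = 1 → ∀ t ∈ Set.Icc (0:ℝ) 1, t • A + (1 - t) • B ∈ S

/-- The property `(H_I(U))`, phrased on lists of (weight, matrix) pairs. -/
inductive HIProp {N n : ℕ} (U : Set (Mat N n)) : List (ℝ × Mat N n) → Prop where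
  | single (l : ℝ) (ξ : Mat N n) (hξ : ξ ∈ U) : HIProp U [(l, ξ)]
  | pair (l₁ l₂ : ℝ) (ξ₁ ξ₂ : Mat N n) (h₁ : ξ₁ ∈ U) (h₂ : ξ₂ ∈ U)
      (hrank : (ξ₁ - ξ₂).rank = 1) : HIProp U [(l₁, ξ₁), (l₂, ξ₂)]
  | step (L rest : List (ℝ × Mat N n)) (l₁ l₂ : ℝ) (ξ₁ ξ₂ : Mat N n)
      (hperm : L.Perm ((l₁, ξ₁) :: (l₂, ξ₂) :: rest)) (hrest : rest ≠ [])
      (h₁ : ξ₁ ∈ U) (h₂ : ξ₂ ∈ U) (hrank : (ξ₁ - ξ₂).rank = 1)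
      (hrec : HIProp U ((l₁ + l₂, ((l₁ + l₂)⁻¹) • (l₁ • ξ₁ + l₂ • ξ₂)) :: rest)) :
      HIProp U L

/-- The family `(λ_i, ξ_i)_{1 ≤ i ≤ I}` satisfies `(H_I(U))`. -/
def SatisfiesH {N n : ℕ} (U : Set (Mat N n)) (I : ℕ) (l : Fin I → ℝ)
    (ξ : Fin I → Mat N n) : Prop :=
  HIProp U (List.ofFn fun i => (l i, ξ i))

/-- The gradient of a map `u : ℝ^n → ℝ^N`, as an `N × n` matrix. -/
def matGrad {N n : ℕ} (u : (Fin n → ℝ) → Fin N → ℝ) (x : Fin n → ℝ) : Mat N n :=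
  LinearMap.toMatrix' (fderiv ℝ u x).toLinearMap

/-- `u` is affine on the set `s`. -/
def AffineOn {N n : ℕ} (u : (Fin n → ℝ) → Fin N → ℝ) (s : Set (Fin n → ℝ)) : Prop :=
  ∃ (A : Mat N n) (b : Fin N → ℝ), ∀ x ∈ s, u x = A.mulVec x + b

/-- `u` is piecewise affine on the open set `Ω`. -/
def PiecewiseAffineOn {N n : ℕ} (u : (Fin n → ℝ) → Fin N → ℝ)
    (Ω : Set (Fin n → ℝ)) : Prop :=
  ContinuousOn u (closure Ω) ∧
  ∃ P : ℕ → Set (Fin n → ℝ),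
    (∀ k, IsOpen (P k)) ∧ (∀ k, P k ⊆ Ω) ∧
    (∀ k l, k ≠ l → Disjoint (P k) (P l)) ∧
    volume (Ω \ ⋃ k, P k) = 0 ∧ ∀ k, AffineOn u (P k)

/-- `u` is piecewise `C¹` on the open set `Ω`. -/
def PiecewiseC1On {N n : ℕ} (u : (Fin n → ℝ) → Fin N → ℝ)
    (Ω : Set (Fin n → ℝ)) : Prop :=
  ContinuousOn u (closure Ω) ∧
  ∃ P : ℕ → Set (Fin n → ℝ),
    (∀ k, IsOpen (P k)) ∧ (∀ k, P k ⊆ Ω) ∧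
    (∀ k l, k ≠ l → Disjoint (P k) (P l)) ∧
    volume (Ω \ ⋃ k, P k) = 0 ∧ ∀ k, ContDiffOn ℝ 1 u (P k)

/-- `u ∈ φ + W₀^{1,∞}(Ω; ℝ^N)`: `u` is Lipschitz on `closure Ω` and agrees with `φ`
on the boundary of `Ω`. -/
def MemW01inf {N n : ℕ} (Ω : Set (Fin n → ℝ)) (φ u : (Fin n → ℝ) → Fin N → ℝ) : Prop :=
  (∃ C : NNReal, LipschitzOnWith C u (closure Ω)) ∧ ∀ x ∈ frontier Ω, u x = φ x

/-- `K` has the relaxation property with respect to `E`. -/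
def HasRelaxationProperty {N n : ℕ} (K E : Set (Mat N n)) : Prop :=
  ∀ Ω : Set (Fin n → ℝ), IsOpen Ω → Bornology.IsBounded Ω →
    ∀ ξ ∈ K, ∀ b : Fin N → ℝ,
      ∃ u : ℕ → (Fin n → ℝ) → Fin N → ℝ,
        (∀ ν, PiecewiseAffineOn (u ν) Ω) ∧
        (∀ ν, MemW01inf Ω (fun x => ξ.mulVec x + b) (u ν)) ∧
        (∀ ν, ∀ᵐ x ∂(volume.restrict Ω), matGrad (u ν) x ∈ E ∪ K) ∧
        (∃ C : NNReal, ∀ ν, LipschitzOnWith C (u ν) (closure Ω)) ∧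
        TendstoUniformlyOn u (fun x => ξ.mulVec x + b) atTop (closure Ω) ∧
        Tendsto (fun ν => ∫ x in Ω, Metric.infDist (matGrad (u ν) x) E) atTop (nhds 0)

/-- The singular values of a square matrix, in nondecreasing order:
the square roots of the eigenvalues of `ξ ξᵀ`, sorted. -/
def singularValues {n : ℕ} (ξ : Matrix (Fin n) (Fin n) ℝ) (i : Fin n) : ℝ :=
  Real.sqrt ((Matrix.isHermitian_mul_conjTranspose_self ξ).eigenvalues
    (Tuple.sort (Matrix.isHermitian_mul_conjTranspose_self ξ).eigenvalues i))

end

section Statements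

open Metric Set

/-! The conformal-anticonformal splitting `x ↦ z x + w x̄` of a real linear map of `ℂ = ℝ²` turns a
`2 × 2` matrix into a pair `(z, w)` of complex numbers with `det = |z|² - |w|²` and singular values
`||z| - |w||`, `|z| + |w|`. Hence membership in `E` depends only on `(|z|, det)`, and `E` is the
union of two level sets of this pair, lying on a line `2 θ |z| - det = c`. Since `± det` and
`2 θ |z| - det` are rank one convex, the hull lies in `{d₁ ≤ det ≤ d₂, 2 θ |z| - det ≤ c}`.
Conversely, a rank one line through `(z, w)` has a direction `(ζ, ω)` with `|ζ| = |ω| = 1`, along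
which `det` is affine. Taking `ζ` along `z` and `⟨w, ω⟩ = |z| - θ` moves `(|z|, det)` along the line
`2 θ |z| - det = c` until both wells are reached; taking `ζ ⊥ z` and `ω ⊥ w` keeps `det` fixed and
raises `|z|` until that line is reached. -/

/-! ### Matrices of rank one -/

section Rank

variable {K : Type*} [Field K]

lemma rank_pos_iff_ne_zero {m n : Type*} [Finite m] [Fintype n] {A : Matrix m n K} :
    0 < A.rank ↔ A ≠ 0 := by
  classical
  cases nonempty_fintype m
  rw [Nat.pos_iff_ne_zero, Ne, Matrix.rank, Submodule.finrank_eq_zero, LinearMap.range_eq_bot,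
    ← Matrix.toLin'_apply', LinearEquiv.map_eq_zero_iff]

lemma rank_lt_card_iff_det_eq_zero {n : Type*} [Fintype n] [DecidableEq n] {A : Matrix n n K} :
    A.rank < Fintype.card n ↔ A.det = 0 := by
  constructor
  · contrapose!
    exact fun h => (Matrix.rank_of_det_ne_zero h).ge
  · rw [← Matrix.exists_mulVec_eq_zero_iff]
    rintro ⟨v, hv, hAv⟩
    have hker : 0 < Module.finrank K (LinearMap.ker A.mulVecLin) :=
      Module.finrank_pos_iff_exists_ne_zero.2 ⟨⟨v, hAv⟩, fun h => hv (congrArg Subtype.val h)⟩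
    have := A.mulVecLin.finrank_range_add_finrank_ker
    rw [Module.finrank_fintype_fun_eq_card] at this
    rw [Matrix.rank]
    lia

lemma rank_fin_two_eq_one_iff {A : Matrix (Fin 2) (Fin 2) K} :
    A.rank = 1 ↔ A ≠ 0 ∧ A.det = 0 := by
  rw [← rank_pos_iff_ne_zero, ← rank_lt_card_iff_det_eq_zero, Fintype.card_fin]
  lia

lemma det_add_of_det_sub_eq_zero {A B : Matrix (Fin 2) (Fin 2) K} (h : (A - B).det = 0) (t : K) :
    (t • A + (1 - t) • B).det = t * A.det + (1 - t) * B.det := by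
  simp only [Matrix.det_fin_two, Matrix.add_apply, Matrix.sub_apply, Matrix.smul_apply,
    smul_eq_mul] at *
  linear_combination -t * (1 - t) * h

end Rank

/-! ### Rank one convexity and the hull -/

section RankOneConvex

variable {N n : ℕ}

lemma rankOneConvexFun_of_convexOn {f : Mat N n → ℝ} (hf : ConvexOn ℝ univ f) :
    RankOneConvexFun f :=
  fun t ht A B _ => hf.2 (mem_univ A) (mem_univ B) ht.1 (sub_nonneg.2 ht.2) (add_sub_cancel t 1)

lemma RankOneConvexFun.add {f g : Mat N n → ℝ} (hf : RankOneConvexFun f)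
    (hg : RankOneConvexFun g) : RankOneConvexFun fun ξ => f ξ + g ξ := by
  intro t ht A B hAB
  linarith [hf t ht A B hAB, hg t ht A B hAB]

lemma rankOneConvexFun_mul_det (k : ℝ) : RankOneConvexFun fun ξ : Mat 2 2 => k * ξ.det := by
  intro t _ A B hAB
  beta_reduce
  rw [det_add_of_det_sub_eq_zero (rank_fin_two_eq_one_iff.1 hAB).2]
  linarith

lemma subset_rcoF (E : Set (Mat N n)) : E ⊆ RcoF E :=
  fun ξ hξ _ _ hfE => hfE ξ hξ

lemma RankOneConvexFun.le_of_mem_rcoF {f : Mat N n → ℝ} (hf : RankOneConvexFun f)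
    {E : Set (Mat N n)} {c : ℝ} (hE : ∀ η ∈ E, f η ≤ c) {ξ : Mat N n} (hξ : ξ ∈ RcoF E) :
    f ξ ≤ c := by
  have hconst : RankOneConvexFun fun _ : Mat N n => -c :=
    rankOneConvexFun_of_convexOn (convexOn_const _ convex_univ)
  have := hξ _ (hf.add hconst) fun η hη => by linarith [hE η hη]
  linarith

lemma rankOneConvexSet_rcoF (E : Set (Mat N n)) : RankOneConvexSet (RcoF E) := by
  intro A hA B hB hAB t ht f hf hfE
  have htA : t * f A ≤ 0 := mul_nonpos_of_nonneg_of_nonpos ht.1 (hA f hf hfE)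
  have htB : (1 - t) * f B ≤ 0 :=
    mul_nonpos_of_nonneg_of_nonpos (sub_nonneg.2 ht.2) (hB f hf hfE)
  linarith [hf t ht A B hAB]

lemma RankOneConvexSet.mem_of_add_smul_mem {S : Set (Mat N n)} (hS : RankOneConvexSet S)
    {X M : Mat N n} (hM : M.rank = 1) {s t : ℝ} (hs : s ≤ 0) (ht : 0 ≤ t)
    (hXs : X + s • M ∈ S) (hXt : X + t • M ∈ S) : X ∈ S := by
  rcases hs.eq_or_lt with rfl | hs
  · simpa using hXs
  have hst : 0 < t - s := by linarith
  have hrank : (X + s • M - (X + t • M)).rank = 1 := by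
    rw [add_sub_add_left_eq_sub, ← sub_smul, Matrix.rank_smul_of_mem_nonZeroDivisors _
      (mem_nonZeroDivisors_of_ne_zero (by linarith)), hM]
  have hX : (t / (t - s)) • (X + s • M) + (1 - t / (t - s)) • (X + t • M) = X := by
    match_scalars <;> field_simp <;> ring
  rw [← hX]
  exact hS _ hXs _ hXt hrank _ ⟨by positivity, (div_le_one hst).2 (by linarith)⟩

end RankOneConvex

/-! ### Conformal and anticonformal parts -/

/-- The coefficient `z` of the real linear map `x ↦ z x + w x̄` of `ℂ` given by a real `2 × 2`
matrix. -/
noncomputable def conformalPart : Mat 2 2 →ₗ[ℝ] ℂ where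
  toFun ξ := ⟨(ξ 0 0 + ξ 1 1) / 2, (ξ 1 0 - ξ 0 1) / 2⟩
  map_add' ξ η := by apply Complex.ext <;> simp <;> ring
  map_smul' t ξ := by apply Complex.ext <;> simp <;> ring

/-- The coefficient `w` of the real linear map `x ↦ z x + w x̄` of `ℂ` given by a real `2 × 2`
matrix. -/
noncomputable def anticonformalPart : Mat 2 2 →ₗ[ℝ] ℂ where
  toFun ξ := ⟨(ξ 0 0 - ξ 1 1) / 2, (ξ 1 0 + ξ 0 1) / 2⟩
  map_add' ξ η := by apply Complex.ext <;> simp <;> ring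
  map_smul' t ξ := by apply Complex.ext <;> simp <;> ring

/-- The real `2 × 2` matrix of the map `x ↦ z x + w x̄` of `ℂ`, with prescribed conformal part `z`
and anticonformal part `w`. -/
def ofParts (z w : ℂ) : Mat 2 2 :=
  !![z.re + w.re, w.im - z.im; w.im + z.im, z.re - w.re]

@[simp]
lemma conformalPart_ofParts (z w : ℂ) : conformalPart (ofParts z w) = z := by
  apply Complex.ext <;> simp [conformalPart, ofParts]

@[simp]
lemma anticonformalPart_ofParts (z w : ℂ) : anticonformalPart (ofParts z w) = w := by
  apply Complex.ext <;> simp [anticonformalPart, ofParts]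

lemma det_eq_norm_sq_sub_norm_sq (ξ : Mat 2 2) :
    ξ.det = ‖conformalPart ξ‖ ^ 2 - ‖anticonformalPart ξ‖ ^ 2 := by
  simp only [Complex.sq_norm, Complex.normSq_apply, conformalPart, anticonformalPart,
    LinearMap.coe_mk, AddHom.coe_mk, Matrix.det_fin_two]
  ring

lemma trace_mul_conjTranspose_self (ξ : Mat 2 2) :
    (ξ * ξ.conjTranspose).trace = 2 * (‖conformalPart ξ‖ ^ 2 + ‖anticonformalPart ξ‖ ^ 2) := by
  simp only [Complex.sq_norm, Complex.normSq_apply, conformalPart, anticonformalPart,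
    LinearMap.coe_mk, AddHom.coe_mk, Matrix.trace_fin_two, Matrix.mul_apply, Fin.sum_univ_two,
    Matrix.conjTranspose_apply, star_trivial]
  ring

lemma continuous_norm_conformalPart : Continuous fun ξ : Mat 2 2 => ‖conformalPart ξ‖ :=
  conformalPart.continuous_of_finiteDimensional.norm

lemma convexOn_norm_conformalPart : ConvexOn ℝ univ fun ξ : Mat 2 2 => ‖conformalPart ξ‖ :=
  convexOn_univ_norm.comp_linearMap conformalPart

lemma rank_ofParts {ζ ω : ℂ} (hζ : ‖ζ‖ = 1) (hω : ‖ω‖ = 1) : (ofParts ζ ω).rank = 1 := by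
  refine rank_fin_two_eq_one_iff.2 ⟨fun h => ?_, ?_⟩
  · have hζ₀ : ζ = 0 := by rw [← conformalPart_ofParts ζ ω, h, map_zero]
    simp [hζ₀] at hζ
  · simp [det_eq_norm_sq_sub_norm_sq, hζ, hω]

open scoped RealInnerProductSpace in
lemma det_add_smul_ofParts (ξ : Mat 2 2) (t : ℝ) (ζ ω : ℂ) :
    (ξ + t • ofParts ζ ω).det = ξ.det + 2 * t * (⟪conformalPart ξ, ζ⟫ - ⟪anticonformalPart ξ, ω⟫)
      + t ^ 2 * (‖ζ‖ ^ 2 - ‖ω‖ ^ 2) := by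
  simp only [det_eq_norm_sq_sub_norm_sq, map_add, map_smul, conformalPart_ofParts,
    anticonformalPart_ofParts, norm_add_sq_real, inner_smul_right, norm_smul, mul_pow,
    Real.norm_eq_abs, sq_abs]
  ring

/-! ### Singular values -/

lemma eq_and_eq_of_add_eq_of_mul_eq {R : Type*} [Field R] [LinearOrder R] [IsStrictOrderedRing R]
    {x y p q : R} (hxy : x ≤ y) (hpq : p ≤ q)
    (hadd : x + y = p + q) (hmul : x * y = p * q) : x = p ∧ y = q := by
  have hsq : (y - x) ^ 2 = (q - p) ^ 2 := by
    linear_combination (x + y + p + q) * hadd - 4 * hmul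
  have hsub : y - x = q - p := (sq_eq_sq₀ (by linarith) (by linarith)).1 hsq
  constructor <;> linarith

lemma singularValues_fin_two (ξ : Mat 2 2) :
    singularValues ξ 0 = |‖conformalPart ξ‖ - ‖anticonformalPart ξ‖| ∧
      singularValues ξ 1 = ‖conformalPart ξ‖ + ‖anticonformalPart ξ‖ := by
  set z := ‖conformalPart ξ‖
  set w := ‖anticonformalPart ξ‖
  have hH := Matrix.isHermitian_mul_conjTranspose_self ξ
  set σ := Tuple.sort hH.eigenvalues
  have hle : hH.eigenvalues (σ 0) ≤ hH.eigenvalues (σ 1) :=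
    Tuple.monotone_sort hH.eigenvalues (Fin.zero_le 1)
  have hsum : hH.eigenvalues (σ 0) + hH.eigenvalues (σ 1) = (z - w) ^ 2 + (z + w) ^ 2 := by
    have htrace := hH.trace_eq_sum_eigenvalues
    rw [← Equiv.sum_comp σ, Fin.sum_univ_two, trace_mul_conjTranspose_self] at htrace
    simp only [RCLike.ofReal_real_eq_id, id_eq] at htrace
    linear_combination -htrace
  have hprod : hH.eigenvalues (σ 0) * hH.eigenvalues (σ 1) = (z - w) ^ 2 * (z + w) ^ 2 := by
    have hdet := hH.det_eq_prod_eigenvalues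
    rw [← Equiv.prod_comp σ, Fin.prod_univ_two, Matrix.det_mul, Matrix.det_conjTranspose,
      star_trivial, det_eq_norm_sq_sub_norm_sq] at hdet
    simp only [RCLike.ofReal_real_eq_id, id_eq] at hdet
    linear_combination -hdet
  obtain ⟨h₀, h₁⟩ := eq_and_eq_of_add_eq_of_mul_eq hle
    (by nlinarith [mul_nonneg (norm_nonneg (conformalPart ξ)) (norm_nonneg (anticonformalPart ξ))])
    hsum hprod
  constructor
  · rw [← Real.sqrt_sq_eq_abs, ← h₀, singularValues]
  · rw [← Real.sqrt_sq (by positivity : 0 ≤ z + w), ← h₁, singularValues]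

section PosDet

variable {ξ : Mat 2 2}

lemma norm_anticonformalPart_lt_of_det_pos (hξ : 0 < ξ.det) :
    ‖anticonformalPart ξ‖ < ‖conformalPart ξ‖ := by
  rwa [det_eq_norm_sq_sub_norm_sq, sub_pos, sq_lt_sq₀ (norm_nonneg _) (norm_nonneg _)] at hξ

lemma singularValues_zero_of_det_pos (hξ : 0 < ξ.det) :
    singularValues ξ 0 = ‖conformalPart ξ‖ - ‖anticonformalPart ξ‖ := by
  rw [(singularValues_fin_two ξ).1,
    abs_of_pos (sub_pos.2 (norm_anticonformalPart_lt_of_det_pos hξ))]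

lemma singularValues_zero_pos_of_det_pos (hξ : 0 < ξ.det) : 0 < singularValues ξ 0 := by
  rw [singularValues_zero_of_det_pos hξ]
  exact sub_pos.2 (norm_anticonformalPart_lt_of_det_pos hξ)

lemma singularValues_add_of_det_pos (hξ : 0 < ξ.det) :
    singularValues ξ 0 + singularValues ξ 1 = 2 * ‖conformalPart ξ‖ := by
  rw [singularValues_zero_of_det_pos hξ, (singularValues_fin_two ξ).2]
  ring

lemma singularValues_mul_of_det_pos (hξ : 0 < ξ.det) :
    singularValues ξ 0 * singularValues ξ 1 = ξ.det := by
  rw [singularValues_zero_of_det_pos hξ, (singularValues_fin_two ξ).2,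
    det_eq_norm_sq_sub_norm_sq]
  ring

lemma singularValues_zero_le_one_of_det_pos (hξ : 0 < ξ.det) :
    singularValues ξ 0 ≤ singularValues ξ 1 := by
  rw [singularValues_zero_of_det_pos hξ, (singularValues_fin_two ξ).2]
  linarith [norm_nonneg (anticonformalPart ξ)]

end PosDet

/-! ### The hull of two wells -/

section InnerProduct

open scoped RealInnerProductSpace

variable {F : Type*} [NormedAddCommGroup F] [InnerProductSpace ℝ F]

lemma exists_norm_eq_one_inner_eq (hF : 1 < Module.rank ℝ F) (x : F) {s : ℝ} (hs : |s| ≤ ‖x‖) :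
    ∃ u : F, ‖u‖ = 1 ∧ ⟪x, u⟫ = s := by
  obtain ⟨u₀, hu₀, hxu₀⟩ : ∃ u₀ : F, ‖u₀‖ = 1 ∧ ⟪x, u₀⟫ = ‖x‖ := by
    have : Nontrivial F := rank_pos_iff_nontrivial.1 (zero_lt_one.trans hF)
    rcases eq_or_ne x 0 with rfl | hx
    · obtain ⟨u₀, hu₀⟩ := exists_norm_eq F zero_le_one
      exact ⟨u₀, hu₀, by simp⟩
    · refine ⟨‖x‖⁻¹ • x, norm_smul_inv_norm (𝕜 := ℝ) hx, ?_⟩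
      have := norm_ne_zero_iff.2 hx
      rw [inner_smul_right, real_inner_self_eq_norm_sq]
      field_simp
  have hneg : -u₀ ∈ sphere (0 : F) 1 := by simp [hu₀]
  have hpos : u₀ ∈ sphere (0 : F) 1 := by simp [hu₀]
  have hIcc := (isPreconnected_sphere hF 0 1).intermediate_value hneg hpos
    (f := fun u => ⟪x, u⟫) (by fun_prop)
  rw [inner_neg_right, hxu₀] at hIcc
  obtain ⟨u, hu, hxu⟩ := hIcc (abs_le.1 hs)
  exact ⟨u, by simpa using hu, hxu⟩

lemma exists_norm_eq_one_inner_eq_zero (hF : 1 < Module.rank ℝ F) (x : F) :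
    ∃ u : F, ‖u‖ = 1 ∧ ⟪x, u⟫ = 0 :=
  exists_norm_eq_one_inner_eq hF x (abs_zero.trans_le (norm_nonneg x))

lemma norm_add_smul_sq (x : F) {u : F} (hu : ‖u‖ = 1) (t : ℝ) :
    ‖x + t • u‖ ^ 2 = ‖x‖ ^ 2 + 2 * t * ⟪x, u⟫ + t ^ 2 := by
  rw [norm_add_sq_real, inner_smul_right, norm_smul, hu, mul_one, Real.norm_eq_abs, sq_abs]
  ring

end InnerProduct

lemma one_lt_rank_real_complex : 1 < Module.rank ℝ ℂ := by simp

/-- The matrices whose conformal part has norm `r` and whose determinant is `d`. For `d > 0` these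
are the matrices of positive determinant whose singular values have sum `2 r` and product `d`. -/
def normDetLevel (r d : ℝ) : Set (Mat 2 2) := {ξ | ‖conformalPart ξ‖ = r ∧ ξ.det = d}

section Laminates

variable {S : Set (Mat 2 2)} {ξ : Mat 2 2}

lemma RankOneConvexSet.mem_of_normDetLevel_det_subset (hS : RankOneConvexSet S) {r : ℝ}
    (hr : ‖conformalPart ξ‖ ≤ r) (h : normDetLevel r ξ.det ⊆ S) : ξ ∈ S := by
  obtain ⟨ζ, hζ, hzζ⟩ := exists_norm_eq_one_inner_eq_zero one_lt_rank_real_complex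
    (conformalPart ξ)
  obtain ⟨ω, hω, hwω⟩ := exists_norm_eq_one_inner_eq_zero one_lt_rank_real_complex
    (anticonformalPart ξ)
  have hr₀ : 0 ≤ r := (norm_nonneg _).trans hr
  have hmem {t : ℝ} (ht : t ^ 2 = r ^ 2 - ‖conformalPart ξ‖ ^ 2) : ξ + t • ofParts ζ ω ∈ S := by
    refine h ⟨?_, ?_⟩
    · rw [← sq_eq_sq₀ (norm_nonneg _) hr₀, map_add, map_smul, conformalPart_ofParts,
        norm_add_smul_sq _ hζ, hzζ, ht]
      ring
    · rw [det_add_smul_ofParts, hzζ, hwω, hζ, hω]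
      ring
  have hsq : √(r ^ 2 - ‖conformalPart ξ‖ ^ 2) ^ 2 = r ^ 2 - ‖conformalPart ξ‖ ^ 2 :=
    Real.sq_sqrt (sub_nonneg.2 (pow_le_pow_left₀ (norm_nonneg _) hr 2))
  exact hS.mem_of_add_smul_mem (rank_ofParts hζ hω) (neg_nonpos.2 (Real.sqrt_nonneg _))
    (Real.sqrt_nonneg _) (hmem ((neg_sq _).trans hsq)) (hmem hsq)

lemma RankOneConvexSet.mem_of_normDetLevel_subset (hS : RankOneConvexSet S) {r₁ r₂ θ : ℝ}
    (hr₁ : 0 ≤ r₁) (h₁ : r₁ ≤ ‖conformalPart ξ‖) (h₂ : ‖conformalPart ξ‖ ≤ r₂)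
    (hθ : θ ^ 2 ≤ 2 * θ * ‖conformalPart ξ‖ - ξ.det)
    (hS₁ : normDetLevel r₁ (ξ.det + 2 * θ * (r₁ - ‖conformalPart ξ‖)) ⊆ S)
    (hS₂ : normDetLevel r₂ (ξ.det + 2 * θ * (r₂ - ‖conformalPart ξ‖)) ⊆ S) : ξ ∈ S := by
  obtain ⟨ζ, hζ, hzζ⟩ := exists_norm_eq_one_inner_eq one_lt_rank_real_complex (conformalPart ξ)
    (abs_norm _).le
  have habs : |‖conformalPart ξ‖ - θ| ≤ ‖anticonformalPart ξ‖ := by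
    rw [det_eq_norm_sq_sub_norm_sq] at hθ
    exact abs_le_of_sq_le_sq (by linarith) (norm_nonneg _)
  obtain ⟨ω, hω, hwω⟩ := exists_norm_eq_one_inner_eq one_lt_rank_real_complex _ habs
  have hmem {r : ℝ} (hr : 0 ≤ r) : ξ + (r - ‖conformalPart ξ‖) • ofParts ζ ω ∈
      normDetLevel r (ξ.det + 2 * θ * (r - ‖conformalPart ξ‖)) := by
    constructor
    · rw [← sq_eq_sq₀ (norm_nonneg _) hr, map_add, map_smul, conformalPart_ofParts,
        norm_add_smul_sq _ hζ, hzζ]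
      ring
    · rw [det_add_smul_ofParts, hzζ, hwω, hζ, hω]
      ring
  exact hS.mem_of_add_smul_mem (rank_ofParts hζ hω) (sub_nonpos.2 h₁) (sub_nonneg.2 h₂)
    (hS₁ (hmem hr₁)) (hS₂ (hmem (hr₁.trans (h₁.trans h₂))))

end Laminates

lemma rankOneConvexFun_mul_norm_conformalPart_sub_det {θ : ℝ} (hθ : 0 ≤ θ) :
    RankOneConvexFun fun ξ : Mat 2 2 => 2 * θ * ‖conformalPart ξ‖ - ξ.det := by
  have hnorm : RankOneConvexFun fun ξ : Mat 2 2 => 2 * θ * ‖conformalPart ξ‖ :=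
    rankOneConvexFun_of_convexOn (convexOn_norm_conformalPart.smul (by positivity))
  simpa only [neg_one_mul, ← sub_eq_add_neg] using hnorm.add (rankOneConvexFun_mul_det (-1))

theorem rcoF_union_normDetLevel {r₁ r₂ d₁ d₂ θ c : ℝ} (hθ : 0 < θ) (hr₁ : 0 ≤ r₁)
    (hd : d₁ ≤ d₂) (h₁ : 2 * θ * r₁ - d₁ = c) (h₂ : 2 * θ * r₂ - d₂ = c) (hc : θ ^ 2 ≤ c) :
    RcoF (normDetLevel r₁ d₁ ∪ normDetLevel r₂ d₂) =
      {ξ | d₁ ≤ ξ.det ∧ ξ.det ≤ d₂ ∧ 2 * θ * ‖conformalPart ξ‖ - ξ.det ≤ c} := by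
  apply Subset.antisymm
  · intro ξ hξ
    have hlower : -1 * ξ.det ≤ -d₁ := by
      refine (rankOneConvexFun_mul_det (-1)).le_of_mem_rcoF ?_ hξ
      rintro η (⟨-, hη⟩ | ⟨-, hη⟩) <;> linarith
    have hupper : 1 * ξ.det ≤ d₂ := by
      refine (rankOneConvexFun_mul_det 1).le_of_mem_rcoF ?_ hξ
      rintro η (⟨-, hη⟩ | ⟨-, hη⟩) <;> linarith
    have hline : 2 * θ * ‖conformalPart ξ‖ - ξ.det ≤ c := by
      refine (rankOneConvexFun_mul_norm_conformalPart_sub_det hθ.le).le_of_mem_rcoF ?_ hξ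
      rintro η (⟨hη, hη'⟩ | ⟨hη, hη'⟩) <;> rw [hη, hη'] <;> linarith
    exact ⟨by linarith, by linarith, hline⟩
  · rintro ξ ⟨hξ₁, hξ₂, hξc⟩
    have hS := rankOneConvexSet_rcoF (normDetLevel r₁ d₁ ∪ normDetLevel r₂ d₂)
    -- `(c + det ξ) / (2 θ)` is the value of `|z|` on the line `2 θ |z| - det = c` at height `det ξ`
    refine hS.mem_of_normDetLevel_det_subset (r := (c + ξ.det) / (2 * θ))
      ((le_div_iff₀ (by positivity)).2 (by linarith)) ?_
    rintro η ⟨hη, hη_det⟩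
    rw [eq_div_iff (by positivity)] at hη
    refine hS.mem_of_normDetLevel_subset (r₁ := r₁) (r₂ := r₂) (θ := θ) hr₁ ?_ ?_ (by linarith)
      ?_ ?_
    · exact le_of_mul_le_mul_left (by linarith) hθ
    · exact le_of_mul_le_mul_left (by linarith) hθ
    · rw [show η.det + 2 * θ * (r₁ - ‖conformalPart η‖) = d₁ by linarith]
      exact subset_union_left.trans (subset_rcoF _)
    · rw [show η.det + 2 * θ * (r₂ - ‖conformalPart η‖) = d₂ by linarith]
      exact subset_union_right.trans (subset_rcoF _)

/-! ### The interior of the hull -/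

lemma exists_pos_add_smul_mem_of_mem_interior {F : Type*} [AddCommGroup F] [Module ℝ F]
    [TopologicalSpace F] [ContinuousAdd F] [ContinuousSMul ℝ F] {s : Set F} {x : F}
    (hx : x ∈ interior s) (v : F) : ∃ t : ℝ, 0 < t ∧ x + t • v ∈ s := by
  have hcont : Tendsto (fun t : ℝ => x + t • v) (nhds 0) (nhds x) :=
    Continuous.tendsto' (by fun_prop) 0 x (by simp)
  have hmem : ∀ᶠ t in nhdsWithin (0 : ℝ) (Ioi 0), x + t • v ∈ s :=
    (hcont.eventually (mem_interior_iff_mem_nhds.1 hx)).filter_mono nhdsWithin_le_nhds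
  exact (eventually_mem_nhdsWithin.and hmem).exists

theorem interior_setOf_det_norm_conformalPart_le (d₁ d₂ θ c : ℝ) :
    interior {ξ : Mat 2 2 | d₁ ≤ ξ.det ∧ ξ.det ≤ d₂ ∧ 2 * θ * ‖conformalPart ξ‖ - ξ.det ≤ c} =
      {ξ | d₁ < ξ.det ∧ ξ.det < d₂ ∧ 2 * θ * ‖conformalPart ξ‖ - ξ.det < c} := by
  apply Subset.antisymm
  · intro ξ hξ
    obtain ⟨ζ, hζ, hzζ⟩ := exists_norm_eq_one_inner_eq_zero one_lt_rank_real_complex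
      (conformalPart ξ)
    obtain ⟨ω, hω, hwω⟩ := exists_norm_eq_one_inner_eq_zero one_lt_rank_real_complex
      (anticonformalPart ξ)
    obtain ⟨s, hs, -, hs_upper, -⟩ := exists_pos_add_smul_mem_of_mem_interior hξ (ofParts ζ 0)
    obtain ⟨t, ht, ht_lower, -, ht_line⟩ :=
      exists_pos_add_smul_mem_of_mem_interior hξ (ofParts 0 ω)
    simp only [det_add_smul_ofParts, hzζ, hwω, hζ, hω, inner_zero_right, norm_zero, map_add,
      map_smul, conformalPart_ofParts, smul_zero, add_zero] at hs_upper ht_lower ht_line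
    have hs_sq : 0 < s ^ 2 := by positivity
    have ht_sq : 0 < t ^ 2 := by positivity
    exact ⟨by linarith, by linarith, by linarith⟩
  · refine interior_maximal (fun ξ ⟨h₁, h₂, h₃⟩ => ⟨h₁.le, h₂.le, h₃.le⟩) ?_
    have hdet : Continuous fun ξ : Mat 2 2 => ξ.det := continuous_id.matrix_det
    exact (isOpen_lt continuous_const hdet).inter ((isOpen_lt hdet continuous_const).inter
      (isOpen_lt ((continuous_norm_conformalPart.const_mul _).sub hdet) continuous_const))

/-! ### Description by singular values -/

lemma setOf_singularValues_eq_and_det_pos {p q : ℝ} (hp : 0 < p) (hpq : p ≤ q) :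
    {ξ : Mat 2 2 | (singularValues ξ 0, singularValues ξ 1) = (p, q) ∧ 0 < ξ.det} =
      normDetLevel ((p + q) / 2) (p * q) := by
  ext ξ
  constructor
  · rintro ⟨h, hξ⟩
    obtain ⟨rfl, rfl⟩ := Prod.mk.inj h
    exact ⟨by rw [singularValues_add_of_det_pos hξ]; ring, (singularValues_mul_of_det_pos hξ).symm⟩
  · rintro ⟨hnorm, hdet⟩
    have hξ : 0 < ξ.det := hdet ▸ mul_pos hp (hp.trans_le hpq)
    refine ⟨Prod.mk_inj.2 (eq_and_eq_of_add_eq_of_mul_eq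
      (singularValues_zero_le_one_of_det_pos hξ) hpq ?_ ?_), hξ⟩
    · rw [singularValues_add_of_det_pos hξ, hnorm]; ring
    · rw [singularValues_mul_of_det_pos hξ, hdet]

lemma setOf_singularValues_mem_and_det_pos {R : Set (ℝ × ℝ)} {d₁ d₂ θ c : ℝ} (hd₁ : 0 ≤ d₁)
    (hR : ∀ x y, 0 < x → x ≤ y →
      ((x, y) ∈ R ↔ d₁ < x * y ∧ x * y < d₂ ∧ θ * (x + y) - x * y < c)) :
    {ξ : Mat 2 2 | (singularValues ξ 0, singularValues ξ 1) ∈ R ∧ 0 < ξ.det} =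
      {ξ | d₁ < ξ.det ∧ ξ.det < d₂ ∧ 2 * θ * ‖conformalPart ξ‖ - ξ.det < c} := by
  have hmem {ξ : Mat 2 2} (hξ : 0 < ξ.det) : (singularValues ξ 0, singularValues ξ 1) ∈ R ↔
      d₁ < ξ.det ∧ ξ.det < d₂ ∧ 2 * θ * ‖conformalPart ξ‖ - ξ.det < c := by
    rw [hR _ _ (singularValues_zero_pos_of_det_pos hξ) (singularValues_zero_le_one_of_det_pos hξ),
      singularValues_add_of_det_pos hξ, singularValues_mul_of_det_pos hξ, mul_left_comm, mul_assoc]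
  ext ξ
  exact ⟨fun ⟨hξR, hξ⟩ => (hmem hξ).1 hξR,
    fun h => ⟨(hmem (hd₁.trans_lt h.1)).2 h, hd₁.trans_lt h.1⟩⟩

/-! ### The region in the plane of singular values -/

section Region

variable {a₁ a₂ b₁ b₂ p q θ x y : ℝ}

lemma mul_add_sub_mul_lt_iff :
    θ * (x + y) - x * y < θ * (p + q) - p * q ↔ (θ - x) * (y - θ) < (θ - p) * (q - θ) := by
  constructor <;> intro h <;> linarith

lemma lt_fst_of_mul_lt_mul (hp : 0 ≤ p) (hy : 0 ≤ y) (hpθ : p ≤ θ) (hθq : θ ≤ q)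
    (hmul : p * q < x * y) (hline : θ * (x + y) - x * y < θ * (p + q) - p * q) : p < x := by
  rw [mul_add_sub_mul_lt_iff] at hline
  by_contra! hx
  rcases le_total y q with hyq | hqy
  · exact hmul.not_ge (mul_le_mul hx hyq hy hp)
  · exact hline.not_ge (mul_le_mul (by linarith) (by linarith) (by linarith) (by linarith))

lemma snd_lt_of_mul_lt_mul (hx : 0 ≤ x) (hq : 0 ≤ q) (hpθ : p ≤ θ) (hθq : θ ≤ q)
    (hmul : x * y < p * q) (hline : θ * (x + y) - x * y < θ * (p + q) - p * q) : y < q := by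
  rw [mul_add_sub_mul_lt_iff] at hline
  by_contra! hy
  rcases le_total p x with hpx | hxp
  · exact hmul.not_ge (mul_le_mul hpx hy hq hx)
  · exact hline.not_ge (mul_le_mul (by linarith) (by linarith) (by linarith) (by linarith))

lemma mul_add_sub_mul_lt_of_le_of_lt (hpθ : p < θ) (hθq : θ < q) (hpx : p ≤ x) (hxy : x ≤ y)
    (hyq : y < q) : θ * (x + y) - x * y < θ * (p + q) - p * q := by
  rw [mul_add_sub_mul_lt_iff]
  rcases le_total y θ with hyθ | hθy
  · calc (θ - x) * (y - θ) ≤ 0 := mul_nonpos_of_nonneg_of_nonpos (by linarith) (by linarith)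
      _ < (θ - p) * (q - θ) := mul_pos (by linarith) (by linarith)
  · calc (θ - x) * (y - θ) ≤ (θ - p) * (y - θ) :=
          mul_le_mul_of_nonneg_right (by linarith) (by linarith)
      _ < (θ - p) * (q - θ) := mul_lt_mul_of_pos_left (by linarith) (by linarith)

lemma lt_div_neg_add_iff (hx : x < θ) :
    y < (-(a₁ * a₂) + θ * (a₁ + a₂) - θ * x) / (-x + θ) ↔
      θ * (x + y) - x * y < θ * (a₁ + a₂) - a₁ * a₂ := by
  rw [lt_div_iff₀ (by linarith)]
  constructor <;> intro h <;> linarith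

lemma mem_relInt_iff (ha₁ : 0 < a₁) (hab : a₁ < b₁) (hb₁θ : b₁ < θ) (hθa₂ : θ < a₂)
    (hb₂ : a₂ < b₂) (hθ : θ * (a₁ + a₂) - a₁ * a₂ = θ * (b₁ + b₂) - b₁ * b₂)
    (hx : 0 < x) (hxy : x ≤ y) :
    (a₁ < x ∧ x ≤ y ∧ y < b₂ ∧ a₁ * a₂ / x < y ∧
      (a₁ < x → x < b₁ → y < (-(a₁ * a₂) + θ * (a₁ + a₂) - θ * x) / (-x + θ)) ∧
      y < b₁ * b₂ / x) ↔
    a₁ * a₂ < x * y ∧ x * y < b₁ * b₂ ∧ θ * (x + y) - x * y < θ * (a₁ + a₂) - a₁ * a₂ := by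
  rw [div_lt_iff₀' hx, lt_div_iff₀' hx]
  constructor
  · rintro ⟨hax, -, hyb, hlower, hline, hupper⟩
    refine ⟨hlower, hupper, ?_⟩
    rcases lt_or_ge x b₁ with hxb | hbx
    · exact (lt_div_neg_add_iff (hxb.trans hb₁θ)).1 (hline hax hxb)
    · rw [hθ]
      exact mul_add_sub_mul_lt_of_le_of_lt hb₁θ (hθa₂.trans hb₂) hbx hxy hyb
  · rintro ⟨hlower, hupper, hline⟩
    have hax : a₁ < x := lt_fst_of_mul_lt_mul ha₁.le (hx.le.trans hxy) (hab.trans hb₁θ).le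
      hθa₂.le hlower hline
    have hyb : y < b₂ := snd_lt_of_mul_lt_mul hx.le (by linarith) hb₁θ.le (hθa₂.trans hb₂).le
      hupper (hθ ▸ hline)
    exact ⟨hax, hxy, hyb, hlower,
      fun _ hxb => (lt_div_neg_add_iff (hxb.trans hb₁θ)).2 hline, hupper⟩

lemma slope_mem_Ioo (hab : a₁ < b₁) (hba : b₁ < a₂) (hb₂ : a₂ < b₂) :
    (-(a₁ * a₂) + b₁ * b₂) / (b₁ + b₂ - a₁ - a₂) ∈ Ioo b₁ a₂ := by
  have hpos : 0 < b₁ + b₂ - a₁ - a₂ := by linarith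
  rw [mem_Ioo, lt_div_iff₀ hpos, div_lt_iff₀ hpos]
  constructor
  · linarith [mul_pos (sub_pos.2 hab) (sub_pos.2 hba)]
  · linarith [mul_pos (sub_pos.2 hb₂) (sub_pos.2 hba)]

end Region

theorem stmt12 (a₁ a₂ b₁ b₂ θ : ℝ) (ha₁ : 0 < a₁) (hab : a₁ < b₁) (hba : b₁ < a₂)
    (hb₂ : a₂ < b₂) (hθ : θ = (-(a₁*a₂) + b₁*b₂) / (b₁ + b₂ - a₁ - a₂))
    (E : Set (Mat 2 2))
    (hE : E = {ξ : Mat 2 2 | ((singularValues ξ 0, singularValues ξ 1) = (a₁, a₂) ∨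
      (singularValues ξ 0, singularValues ξ 1) = (b₁, b₂)) ∧ 0 < ξ.det})
    (relintRΛ : Set (ℝ × ℝ))
    (hrel : relintRΛ = {p : ℝ × ℝ | a₁ < p.1 ∧ p.1 ≤ p.2 ∧ p.2 < b₂ ∧
      a₁ * a₂ / p.1 < p.2 ∧
      (a₁ < p.1 → p.1 < b₁ → p.2 < (-(a₁*a₂) + θ*(a₁+a₂) - θ*p.1) / (-p.1 + θ)) ∧
      p.2 < b₁ * b₂ / p.1}) :
    interior (RcoF E)
      = {ξ : Mat 2 2 | (singularValues ξ 0, singularValues ξ 1) ∈ relintRΛ ∧ 0 < ξ.det} := by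
  obtain ⟨hb₁θ, hθa₂⟩ : θ ∈ Ioo b₁ a₂ := hθ ▸ slope_mem_Ioo hab hba hb₂
  have hline : θ * (a₁ + a₂) - a₁ * a₂ = θ * (b₁ + b₂) - b₁ * b₂ := by
    rw [eq_div_iff (by linarith)] at hθ
    linarith
  have hθ_sq : θ ^ 2 ≤ θ * (a₁ + a₂) - a₁ * a₂ := by
    linarith [mul_pos (sub_pos.2 (hab.trans hb₁θ)) (sub_pos.2 hθa₂)]
  have hd : a₁ * a₂ ≤ b₁ * b₂ := by gcongr <;> linarith
  have hd₁ : 0 ≤ a₁ * a₂ := mul_nonneg ha₁.le (by linarith)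
  have hE_wells : E = normDetLevel ((a₁ + a₂) / 2) (a₁ * a₂) ∪
      normDetLevel ((b₁ + b₂) / 2) (b₁ * b₂) := by
    rw [← setOf_singularValues_eq_and_det_pos ha₁ (by linarith),
      ← setOf_singularValues_eq_and_det_pos (ha₁.trans hab) (by linarith), hE]
    simp only [or_and_right]
    rfl
  rw [hE_wells, rcoF_union_normDetLevel (θ := θ) (by linarith) (by linarith) hd (by ring)
      (by rw [hline]; ring) hθ_sq, interior_setOf_det_norm_conformalPart_le,
    setOf_singularValues_mem_and_det_pos hd₁ fun x y hx hxy => ?_]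
  rw [hrel]
  exact mem_relInt_iff ha₁ hab hb₁θ hθa₂ hb₂ hline hx hxy

end Statements
end

section
/- Let a_1 < b_1, a_2 < b_2 with a_1, a_2 > 0, a_1 ≤ a_2, b_1 ≤ b_2, and either a_1 < a_2 or b_1 < b_2. Let Γ := {(a_1 + t(b_1 − a_1), a_2 + t(b_2 − a_2)) : t ∈ [0,1]}, rel int Γ := {(a_1 + t(b_1 − a_1), a_2 + t(b_2 − a_2)) : t ∈ (0,1)}, and Λ_K := ⋃_{(α_1,α_2) ∈ rel int Γ} {(x_1, x_2) ∈ ℝ² : x_1 x_2 = α_1 α_2, 0 < x_1 ≤ x_2 < α_2}. Then Λ_K is open in the subspace {(x_1, x_2) ∈ ℝ² : x_1 ≤ x_2}, and consequently the set K := {ξ ∈ ℝ^{2×2} : (λ_1(ξ), λ_2(ξ)) ∈ Λ_K, det ξ > 0} is open in ℝ^{2×2}. -/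
open MeasureTheory Filter

attribute [local instance] Classical.propDecidable
attribute [local instance] Matrix.frobeniusNormedAddCommGroup Matrix.frobeniusNormedSpace

section Statements

open Metric Set

/-!
For `x₁ ≤ x₂`, membership of `(x₁, x₂)` in `Λ_K` amounts to `0 < x₁` together with a condition on
`(x₁ x₂, x₂)`: this pair must lie in the image of `{(t, y) | y < α₂ t}` under
`(t, y) ↦ (α₁ t * α₂ t, y)`. That image is open because `t ↦ α₁ t * α₂ t` is an open map, having a
positive derivative on `(0, 1)`. Hence `Λ_K` has open preimage under every continuous map into
`{x₁ ≤ x₂}`, in particular under the inclusion and under `ξ ↦ (λ₁ ξ, λ₂ ξ)`. The latter is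
continuous because `(λ₂ ± λ₁)² = tr (ξ ξᵀ) ± 2 |det ξ|`.
-/

section SingularValues

variable {n : ℕ} (ξ : Mat n n)

theorem singularValues_nonneg (i : Fin n) : 0 ≤ singularValues ξ i :=
  Real.sqrt_nonneg _

theorem monotone_singularValues : Monotone (singularValues ξ) := fun _ _ hij =>
  Real.sqrt_le_sqrt
    (Tuple.monotone_sort (Matrix.isHermitian_mul_conjTranspose_self ξ).eigenvalues hij)

theorem sq_singularValues (i : Fin n) :
    singularValues ξ i ^ 2 = (Matrix.isHermitian_mul_conjTranspose_self ξ).eigenvalues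
      (Tuple.sort (Matrix.isHermitian_mul_conjTranspose_self ξ).eigenvalues i) :=
  Real.sq_sqrt ((Matrix.posSemidef_self_mul_conjTranspose ξ).eigenvalues_nonneg _)

theorem sum_sq_singularValues : ∑ i, singularValues ξ i ^ 2 = (ξ * ξ.conjTranspose).trace := by
  simp only [sq_singularValues]
  rw [Equiv.sum_comp]
  exact (Matrix.isHermitian_mul_conjTranspose_self ξ).trace_eq_sum_eigenvalues.symm

theorem prod_singularValues : ∏ i, singularValues ξ i = |ξ.det| := by
  have hsq : (∏ i, singularValues ξ i) ^ 2 = ξ.det ^ 2 := calc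
    (∏ i, singularValues ξ i) ^ 2 = (ξ * ξ.conjTranspose).det := by
      simp only [← Finset.prod_pow, sq_singularValues]
      rw [Equiv.prod_comp]
      exact (Matrix.isHermitian_mul_conjTranspose_self ξ).det_eq_prod_eigenvalues.symm
    _ = ξ.det ^ 2 := by
      rw [Matrix.det_mul, Matrix.det_conjTranspose, star_trivial, sq]
  rw [← Real.sqrt_sq_eq_abs, ← hsq,
    Real.sqrt_sq (Finset.prod_nonneg fun i _ => singularValues_nonneg ξ i)]

end SingularValues

section SingularValuesFinTwo

variable (ξ : Mat 2 2)

theorem sq_singularValues_one_add_zero :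
    (singularValues ξ 1 + singularValues ξ 0) ^ 2 =
      (ξ * ξ.conjTranspose).trace + 2 * |ξ.det| := by
  rw [← sum_sq_singularValues, ← prod_singularValues, Fin.sum_univ_two, Fin.prod_univ_two]
  ring

theorem sq_singularValues_one_sub_zero :
    (singularValues ξ 1 - singularValues ξ 0) ^ 2 =
      (ξ * ξ.conjTranspose).trace - 2 * |ξ.det| := by
  rw [← sum_sq_singularValues, ← prod_singularValues, Fin.sum_univ_two, Fin.prod_univ_two]
  ring

theorem continuous_singularValues_fin_two :
    Continuous fun ξ : Mat 2 2 => (singularValues ξ 0, singularValues ξ 1) := by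
  have htrace : Continuous fun ξ : Mat 2 2 => (ξ * ξ.conjTranspose).trace :=
    (continuous_id.matrix_mul continuous_id.matrix_conjTranspose).matrix_trace
  have hdet : Continuous fun ξ : Mat 2 2 => 2 * |ξ.det| :=
    continuous_id.matrix_det.abs.const_mul 2
  have hadd : Continuous fun ξ : Mat 2 2 => singularValues ξ 1 + singularValues ξ 0 :=
    (htrace.add hdet).sqrt.congr fun ξ => by
      rw [Pi.add_apply, ← sq_singularValues_one_add_zero, Real.sqrt_sq]
      exact add_nonneg (singularValues_nonneg ξ 1) (singularValues_nonneg ξ 0)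
  have hsub : Continuous fun ξ : Mat 2 2 => singularValues ξ 1 - singularValues ξ 0 :=
    (htrace.sub hdet).sqrt.congr fun ξ => by
      rw [Pi.sub_apply, ← sq_singularValues_one_sub_zero, Real.sqrt_sq]
      exact sub_nonneg.2 (monotone_singularValues ξ zero_le_one)
  refine .prodMk ?_ ?_
  · exact ((hadd.sub hsub).div_const 2).congr fun ξ => by rw [Pi.sub_apply]; ring
  · exact ((hadd.add hsub).div_const 2).congr fun ξ => by rw [Pi.add_apply]; ring

end SingularValuesFinTwo

theorem isOpenMap_domRestrict_of_hasStrictDerivAt {𝕜 : Type*} [NontriviallyNormedField 𝕜]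
    [CompleteSpace 𝕜] {f f' : 𝕜 → 𝕜} {s : Set 𝕜} (hs : IsOpen s)
    (hf : ∀ x ∈ s, HasStrictDerivAt f (f' x) x) (hf' : ∀ x ∈ s, f' x ≠ 0) :
    IsOpenMap (s.domRestrict f) := by
  refine isOpenMap_iff_nhds_le.2 fun x => ?_
  rw [domRestrict_eq, ← Filter.map_map, map_nhds_subtype_coe_eq_nhds x.2 (hs.mem_nhds x.2)]
  exact ((hf x x.2).map_nhds_eq (hf' x x.2)).ge

theorem isOpenMap_mul_segment {a₁ a₂ b₁ b₂ : ℝ} (ha₁ : 0 ≤ a₁) (ha₂ : 0 ≤ a₂)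
    (hab₁ : a₁ < b₁) (hab₂ : a₂ < b₂) :
    IsOpenMap fun t : Ioo (0 : ℝ) 1 => (a₁ + t * (b₁ - a₁)) * (a₂ + t * (b₂ - a₂)) := by
  have hline (a b t : ℝ) : HasStrictDerivAt (fun t => a + t * (b - a)) (b - a) t := by
    simpa using ((hasStrictDerivAt_id t).mul_const (b - a)).const_add a
  refine isOpenMap_domRestrict_of_hasStrictDerivAt isOpen_Ioo
    (fun t _ => (hline a₁ b₁ t).mul (hline a₂ b₂ t)) fun t ht => ?_
  have ht₀ : 0 < t := ht.1
  rw [← sub_pos] at hab₁ hab₂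
  positivity

section HyperbolaArcs

/-- The union over `t` of the arcs of the hyperbolas `x₁ x₂ = d t` on which `0 < x₁ ≤ x₂ < β t`.
The set `Λ_K` is the case `d = α₁ α₂`, `β = α₂` for a parametrization `(α₁, α₂)` of `rel int Γ`. -/
def hyperbolaArcs {T : Type*} (d β : T → ℝ) : Set (ℝ × ℝ) :=
  ⋃ t, {x | x.1 * x.2 = d t ∧ 0 < x.1 ∧ x.1 ≤ x.2 ∧ x.2 < β t}

variable {T X Y : Type*} [TopologicalSpace T] [TopologicalSpace X] [TopologicalSpace Y]

theorem isOpen_setOf_exists_eq_and_lt [LinearOrder Y] [OrderClosedTopology Y]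
    {d : T → X} {β : T → Y} (hd : IsOpenMap d) (hβ : Continuous β) :
    IsOpen {q : X × Y | ∃ t, q.1 = d t ∧ q.2 < β t} := by
  have himage : {q : X × Y | ∃ t, q.1 = d t ∧ q.2 < β t} =
      Prod.map d id '' {p : T × Y | p.2 < β p.1} := by
    ext ⟨x, y⟩
    simp [eq_comm, and_comm]
  rw [himage]
  exact hd.prodMap .id _ (isOpen_lt continuous_snd (hβ.comp continuous_fst))

variable {d β : T → ℝ}

theorem isOpen_preimage_hyperbolaArcs (hd : IsOpenMap d) (hβ : Continuous β) {f : X → ℝ × ℝ}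
    (hf : Continuous f) (hle : ∀ x, (f x).1 ≤ (f x).2) : IsOpen (f ⁻¹' hyperbolaArcs d β) := by
  have hpre : f ⁻¹' hyperbolaArcs d β = {x | 0 < (f x).1} ∩
      (fun x => ((f x).1 * (f x).2, (f x).2)) ⁻¹' {q | ∃ t, q.1 = d t ∧ q.2 < β t} := by
    ext x
    simp only [hyperbolaArcs, mem_preimage, mem_iUnion, mem_ofPred_eq, mem_inter_iff, hle x,
      true_and, and_left_comm (b := 0 < (f x).1), exists_and_left]
  rw [hpre]
  exact (isOpen_lt continuous_const hf.fst).inter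
    ((isOpen_setOf_exists_eq_and_lt hd hβ).preimage (by fun_prop))

theorem stmt16_general (hd : IsOpenMap d) (hβ : Continuous β) :
    IsOpen {p : {q : ℝ × ℝ // q.1 ≤ q.2} | (p : ℝ × ℝ) ∈ hyperbolaArcs d β} ∧
    IsOpen {ξ : Mat 2 2 |
      (singularValues ξ 0, singularValues ξ 1) ∈ hyperbolaArcs d β ∧ 0 < ξ.det} := by
  constructor
  · exact isOpen_preimage_hyperbolaArcs hd hβ continuous_subtype_val Subtype.prop
  · exact (isOpen_preimage_hyperbolaArcs hd hβ continuous_singularValues_fin_two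
      fun ξ => monotone_singularValues ξ zero_le_one).inter
      (isOpen_lt continuous_const continuous_id.matrix_det)

end HyperbolaArcs

theorem stmt16 (a₁ a₂ b₁ b₂ : ℝ) (ha₁ : 0 < a₁) (ha₂ : 0 < a₂) (ha : a₁ ≤ a₂)
    (hb : b₁ ≤ b₂) (hab₁ : a₁ < b₁) (hab₂ : a₂ < b₂) (hor : a₁ < a₂ ∨ b₁ < b₂)
    (ΛK : Set (ℝ × ℝ))
    (hΛK : ΛK = ⋃ t ∈ Set.Ioo (0:ℝ) 1,
      {x : ℝ × ℝ | x.1 * x.2 = (a₁ + t*(b₁-a₁)) * (a₂ + t*(b₂-a₂)) ∧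
        0 < x.1 ∧ x.1 ≤ x.2 ∧ x.2 < a₂ + t*(b₂-a₂)}) :
    IsOpen {p : {q : ℝ × ℝ // q.1 ≤ q.2} | (p : ℝ × ℝ) ∈ ΛK} ∧
    IsOpen {ξ : Mat 2 2 | (singularValues ξ 0, singularValues ξ 1) ∈ ΛK ∧ 0 < ξ.det} := by
  rw [hΛK, biUnion_eq_iUnion]
  exact stmt16_general (isOpenMap_mul_segment ha₁.le ha₂.le hab₁ hab₂) (by fun_prop)

end Statements
end
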